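/- Let π* be an optimal assignment for weights w and let (a,b) be an edge assigned in π*. Then for every real t with t ≤ s_w(a,b), the single-edge perturbation δ defined by δ(a,b) = t and δ = 0 on all other edges is an allowable perturbation for (w, π*). -/

import Mathlib

open Finset Filter Topology

/-- Cost of an assignment `π : T → A` under weights `w : A × T → ℝ`. -/
noncomputable def cost {A T : Type*} [Fintype T] (w : A × T → ℝ) (π : T → A) : ℝ :=
  ∑ b : T, w (π b, b)

/-- `πs` is an optimal assignment for weights `w`: it is injective (an assignment)
and minimizes the cost among all assignments. -/
def Optimal {A T : Type*} [Fintype T] (w : A × T → ℝ) (πs : T → A) : Prop :=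
  Function.Injective πs ∧ ∀ π : T → A, Function.Injective π → cost w πs ≤ cost w π

/-- `δ` is an allowable perturbation for `(w, πs)`: `πs` remains optimal for `w + δ`. -/
def Allowable {A T : Type*} [Fintype T] (w δ : A × T → ℝ) (πs : T → A) : Prop :=
  Optimal (w + δ) πs

-- The element-wise sensitivity of edge `(a, b)` for weights `w` and assignment `πs`.
open Classical in
noncomputable def sens {A T : Type*} [Fintype T] (w : A × T → ℝ) (πs : T → A)
    (a : A) (b : T) : ℝ :=
  if πs b = a then
    sInf {c | ∃ π : T → A, Function.Injective π ∧ π b ≠ a ∧ cost w π = c} - cost w πs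
  else
    cost w πs - sInf {c | ∃ π : T → A, Function.Injective π ∧ π b = a ∧ cost w π = c}

theorem cost_add {A T : Type*} [Fintype T] (w δ : A × T → ℝ) (π : T → A) :
    cost (w + δ) π = cost w π + cost δ π :=
  Finset.sum_add_distrib

theorem cost_ite_eq {A T : Type*} [Fintype T] [DecidableEq A] [DecidableEq (A × T)]
    (π : T → A) (a : A) (b : T) (t : ℝ) :
    cost (fun e => if e = (a, b) then t else 0) π = if π b = a then t else 0 := by
  have off_task : ∀ c ∈ univ, c ≠ b → (if (π c, c) = (a, b) then t else 0) = 0 := by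
    intro c _ hc
    simp [hc]
  rw [cost, Finset.sum_eq_single_of_mem b (mem_univ b) off_task]
  simp only [Prod.mk.injEq, and_true]

theorem Optimal.bddBelow_cost {A T : Type*} [Fintype T] {w : A × T → ℝ} {πs : T → A}
    (hopt : Optimal w πs) (p : (T → A) → Prop) :
    BddBelow {c | ∃ π : T → A, Function.Injective π ∧ p π ∧ cost w π = c} := by
  refine ⟨cost w πs, ?_⟩
  rintro _ ⟨π, hπ, -, rfl⟩
  exact hopt.2 π hπ

theorem Optimal.cost_add_sens_le {A T : Type*} [Fintype T] {w : A × T → ℝ} {πs π : T → A}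
    {a : A} {b : T} (hopt : Optimal w πs) (hab : πs b = a) (hπ : Function.Injective π)
    (hne : π b ≠ a) : cost w πs + sens w πs a b ≤ cost w π := by
  rw [sens, if_pos hab, add_sub_cancel]
  exact csInf_le (hopt.bddBelow_cost fun π => π b ≠ a) ⟨π, hπ, hne, rfl⟩

-- If every assignment uses `(a, b)`, then `sens` contains the junk value `sInf ∅ = 0`; the
-- conclusion then holds for every real `t`, since all costs shift by `t` together.
open Classical in
theorem stmt3_general {A T : Type*} [Fintype T] (w : A × T → ℝ) (πs : T → A)
    (hopt : Optimal w πs) (a : A) (b : T) (hab : πs b = a)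
    (t : ℝ) (ht : t ≤ sens w πs a b) :
    Allowable w (fun e => if e = (a, b) then t else 0) πs := by
  refine ⟨hopt.1, fun π hπ => ?_⟩
  rw [cost_add, cost_add, cost_ite_eq, cost_ite_eq, if_pos hab]
  by_cases hπb : π b = a
  · rw [if_pos hπb]
    gcongr
    exact hopt.2 π hπ
  · rw [if_neg hπb, add_zero]
    calc cost w πs + t ≤ cost w πs + sens w πs a b := by gcongr
      _ ≤ cost w π := hopt.cost_add_sens_le hab hπ hπb

open Classical in
theorem stmt3 {A T : Type*} [Fintype A] [Fintype T] [Nonempty A] [Nonempty T]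
    (hT : 2 ≤ Fintype.card T) (hAT : Fintype.card T ≤ Fintype.card A)
    (w : A × T → ℝ) (πs : T → A)
    (hopt : Optimal w πs)
    (a : A) (b : T) (hab : πs b = a)
    (t : ℝ) (ht : t ≤ sens w πs a b) :
    Allowable w (fun e => if e = (a, b) then t else 0) πs :=
  stmt3_general w πs hopt a b hab t ht
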